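/- Let S be a complete c-semiring, Σ an alphabet, and A, W, Z : List Σ → S formal power series. If W·Z ≤ A, then there exists a factorization (X, Y) of A with W ≤ X and Z ≤ Y. -/

import Mathlib

/-!
The pointwise form of `X·Y ≤ A` is `X u * Y v ≤ A (u ++ v)` for all words `u`, `v`. Since
multiplication in `S` preserves suprema in each argument, this condition on `Y` (for fixed `X`)
is closed under suprema, so the residuals `X \ A` and `A / Y` are themselves solutions, hence the
largest ones: `X·Y ≤ A ↔ Y ≤ X \ A ↔ X ≤ A / Y`.

Given `W·Z ≤ A`, put `Y = W \ A` and `X = A / Y`. Then `Z ≤ Y`, and `W·Y ≤ A` gives `W ≤ X`.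
If `X ≤ X'`, `Y ≤ Y'` and `X'·Y' ≤ A`, then `X'·Y ≤ A` forces `X' ≤ A / Y = X`, and
`W ≤ X ≤ X'` gives `W·Y' ≤ A`, which forces `Y' ≤ W \ A = Y`.
-/

/-- A complete c-semiring: a complete lattice with a commutative monoid
multiplication distributing over arbitrary suprema, whose unit is the top element.
Addition is join, zero is `⊥`, infinitary sums are suprema. -/
class CompleteCSemiring (S : Type*) extends CompleteLattice S, CommMonoid S where
  mul_sSup : ∀ (a : S) (s : Set S), a * sSup s = ⨆ b ∈ s, a * b
  one_eq_top : (1 : S) = ⊤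

namespace FPS

open Classical
noncomputable section

variable {S : Type*} [CompleteCSemiring S] {α : Type*}

/-- Cauchy product of formal power series. -/
def cauchy (A B : List α → S) : List α → S :=
  fun w => ⨆ (u : List α) (v : List α) (_ : u ++ v = w), A u * B v

/-- Left quotient of `A` by the series `X`. -/
def lquot (X A : List α → S) : List α → S := fun v => ⨆ u : List α, X u * A (u ++ v)

/-- Right quotient of `A` by the series `Y`. -/
def rquot (A Y : List α → S) : List α → S := fun v => ⨆ u : List α, A (v ++ u) * Y u

/-- Left residual `X \ A`. -/
def lres (X A : List α → S) : List α → S := sSup {Z | cauchy X Z ≤ A}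

/-- Right residual `A / Y`. -/
def rres (A Y : List α → S) : List α → S := sSup {Z | cauchy Z Y ≤ A}

/-- Residual in the semiring `S`: `a ⇨ b`. -/
def resid (a b : S) : S := sSup {x | a * x ≤ b}

/-- Inclusion degree of the series `f` into `g`. -/
def incl (f g : List α → S) : S := ⨅ u : List α, resid (f u) (g u)

/-- A word viewed as a series: `1` at `u` and `⊥` elsewhere. -/
def wordSeries (u : List α) : List α → S := fun w => if w = u then 1 else ⊥

/-- Reversal of a series. -/
def rev (A : List α → S) : List α → S := fun w => A w.reverse

/-- Extended transition map of a weighted automaton. -/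
def deltaStar {Q : Type*} (δ : Q → α → Q → S) : Q → List α → Q → S
  | q, [], p => ⨆ _ : q = p, 1
  | q, a :: w, p => ⨆ r : Q, δ q a r * deltaStar δ r w p

/-- Behaviour of a weighted automaton. -/
def behavior {Q : Type*} (δ : Q → α → Q → S) (I F : Q → S) : List α → S :=
  fun w => ⨆ (p : Q) (q : Q), I p * deltaStar δ p w q * F q

/-- Past of a state of a weighted automaton. -/
def past {Q : Type*} (δ : Q → α → Q → S) (I : Q → S) (q : Q) : List α → S :=
  fun w => ⨆ p : Q, I p * deltaStar δ p w q

/-- Future of a state of a weighted automaton. -/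
def fut {Q : Type*} (δ : Q → α → Q → S) (F : Q → S) (q : Q) : List α → S :=
  fun w => ⨆ p : Q, deltaStar δ q w p * F p

/-- A series is DWA-regular if it is recognized by a finite deterministic
weighted automaton. -/
def DWARegular (A : List α → S) : Prop :=
  ∃ (Q : Type) (_ : Fintype Q) (δ : Q → α → Q) (q0 : Q) (F : Q → S),
    ∀ w : List α, A w = F (w.foldl δ q0)

/-- A series is regular if it is the behaviour of a finite weighted automaton. -/
def Regular (A : List α → S) : Prop :=
  ∃ (Q : Type) (_ : Fintype Q) (δ : Q → α → Q → S) (I F : Q → S),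
    behavior δ I F = A

/-- `(X, Y)` is a factorization of `A`. -/
def IsFactorization (A X Y : List α → S) : Prop :=
  cauchy X Y ≤ A ∧
    ∀ X' Y' : List α → S, X ≤ X' → Y ≤ Y' → cauchy X' Y' ≤ A → X' = X ∧ Y' = Y

/-- The set of factorizations of `A` (states of the universal weighted automaton). -/
def Fact (A : List α → S) := {p : (List α → S) × (List α → S) // IsFactorization A p.1 p.2}

/-- Initial weights of the universal weighted automaton. -/
def JA (A : List α → S) (p : Fact A) : S := p.1.1 []

/-- Final weights of the universal weighted automaton. -/
def GA (A : List α → S) (p : Fact A) : S := p.1.2 []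

/-- Transition weights of the universal weighted automaton. -/
def etaA (A : List α → S) (p : Fact A) (σ : α) (q : Fact A) : S :=
  incl (cauchy (cauchy p.1.1 (wordSeries [σ])) q.1.2) A

/-- The relation `u ≡_A v`. -/
def eqA (A : List α → S) : Setoid (List α) where
  r u v := ∀ w, A (u ++ w) = A (v ++ w)
  iseqv := ⟨fun _ _ => rfl, fun h w => (h w).symm, fun h1 h2 w => (h1 w).trans (h2 w)⟩

end

end FPS

namespace FPS

variable {S : Type*} [CompleteCSemiring S] {α : Type*}

theorem mul_le_mul_of_le {a b c d : S} (hab : a ≤ b) (hcd : c ≤ d) : a * c ≤ b * d := by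
  have left : ∀ {x y z : S}, y ≤ z → x * y ≤ x * z := by
    intro x y z hyz
    -- distribute `x` over `z = sSup {y, z}`
    have hz : sSup {y, z} = z := by rw [sSup_pair, sup_eq_right.2 hyz]
    calc x * y ≤ ⨆ t ∈ ({y, z} : Set S), x * t :=
          le_iSup₂ (f := fun t (_ : t ∈ ({y, z} : Set S)) => x * t) y (Set.mem_insert y {z})
      _ = x * z := by rw [← CompleteCSemiring.mul_sSup, hz]
  calc a * c ≤ a * d := left hcd
    _ = d * a := mul_comm _ _
    _ ≤ d * b := left hab
    _ = b * d := mul_comm _ _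

theorem cauchy_le_iff {A X Y : List α → S} :
    cauchy X Y ≤ A ↔ ∀ u v, X u * Y v ≤ A (u ++ v) := by
  constructor
  · intro h u v
    refine le_trans ?_ (h (u ++ v))
    exact le_iSup_of_le u (le_iSup_of_le v (le_iSup_of_le rfl le_rfl))
  · intro h w
    refine iSup_le fun u => iSup_le fun v => iSup_le fun huv => ?_
    rw [← huv]
    exact h u v

theorem cauchy_mono {X X' Y Y' : List α → S} (hX : X ≤ X') (hY : Y ≤ Y') :
    cauchy X Y ≤ cauchy X' Y' :=
  cauchy_le_iff.2 fun u v =>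
    (mul_le_mul_of_le (hX u) (hY v)).trans (cauchy_le_iff.1 le_rfl u v)

/-- The left residual is itself a solution of `X·Z ≤ A`, because multiplication distributes over
the pointwise supremum defining it. -/
theorem cauchy_lres_le (X A : List α → S) : cauchy X (lres X A) ≤ A := by
  refine cauchy_le_iff.2 fun u v => ?_
  rw [lres, sSup_apply, iSup, CompleteCSemiring.mul_sSup]
  refine iSup₂_le ?_
  rintro _ ⟨⟨Z, hZ⟩, rfl⟩
  exact cauchy_le_iff.1 hZ u v

/-- The right residual is itself a solution of `Z·Y ≤ A`. -/
theorem cauchy_rres_le (A Y : List α → S) : cauchy (rres A Y) Y ≤ A := by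
  refine cauchy_le_iff.2 fun u v => ?_
  rw [mul_comm, rres, sSup_apply, iSup, CompleteCSemiring.mul_sSup]
  refine iSup₂_le ?_
  rintro _ ⟨⟨Z, hZ⟩, rfl⟩
  rw [mul_comm]
  exact cauchy_le_iff.1 hZ u v

theorem le_lres {A X Y : List α → S} (h : cauchy X Y ≤ A) : Y ≤ lres X A := le_sSup h

theorem le_rres {A X Y : List α → S} (h : cauchy X Y ≤ A) : X ≤ rres A Y := le_sSup h

end FPS

open FPS in
/-- every sub-factorization is dominated by a factorization. -/
theorem subfactorization_le_factorization {S : Type*} [CompleteCSemiring S]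
    {α : Type*} (A W Z : List α → S) (h : cauchy W Z ≤ A) :
    ∃ X Y : List α → S, IsFactorization A X Y ∧ W ≤ X ∧ Z ≤ Y := by
  have hW : W ≤ rres A (lres W A) := le_rres (cauchy_lres_le W A)
  refine ⟨rres A (lres W A), lres W A, ⟨cauchy_rres_le _ _, fun X' Y' hX hY hA => ⟨?_, ?_⟩⟩,
    hW, le_lres h⟩
  · exact le_antisymm (le_rres ((cauchy_mono le_rfl hY).trans hA)) hX
  · exact le_antisymm (le_lres ((cauchy_mono (hW.trans hX) le_rfl).trans hA)) hY
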